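/- arXiv:1805.11718 — 2 statements merged into one kernel-verified Lean document; each statement's English description precedes it below -/
import Mathlib

section
/- Let (Ω, μ) be a probability space and let P : Ω → Matrix (Fin N) (Fin N) ℝ be a random matrix such that ω ↦ ‖P(ω)x‖ is integrable for every x and the entrywise Bochner integral satisfies ∫ P(ω)ᵀ P(ω) dμ(ω) = (K/N) • (identity matrix), where 1 ≤ K ≤ N. Let G : ℝ^M → ℝ^N be an L-Lipschitz map with respect to Euclidean norms. Then for all y₁, y₂ ∈ ℝ^M, ∫ ‖P(ω)(G(y₁) − G(y₂))‖ dμ(ω) ≤ √(K/N) · L · ‖y₁ − y₂‖. -/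
/-!
Jensen's inequality gives `(∫ ‖P x‖)² ≤ ∫ ‖P x‖² = xᵀ (∫ PᵀP) x = (K/N) ‖x‖²`; apply this to
`x = G y₁ - G y₂` and use the Lipschitz bound.

Expanding `∫ ‖P x‖²` requires integrability of the entries of the Gram matrix `PᵀP`, which is not
assumed but follows from the hypotheses (`integrable_gram_entry`). The diagonal entries have
non-zero Bochner integral, hence are integrable. The off-diagonal entries are measurable by
polarization, and dominated by the diagonal ones.
-/

open MeasureTheory Matrix

/-- Euclidean norm of a vector in `Fin n → ℝ`. -/
noncomputable def euclNorm {n : ℕ} (x : Fin n → ℝ) : ℝ :=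
  ‖(WithLp.equiv 2 (Fin n → ℝ)).symm x‖

lemma euclNorm_sq {n : ℕ} (v : Fin n → ℝ) : euclNorm v ^ 2 = v ⬝ᵥ v := by
  unfold euclNorm
  rw [EuclideanSpace.real_norm_sq_eq]
  simp [dotProduct, sq]

lemma euclNorm_mulVec_sq {n : ℕ} (A : Matrix (Fin n) (Fin n) ℝ) (x : Fin n → ℝ) :
    euclNorm (A.mulVec x) ^ 2 = ∑ i, ∑ j, x i * x j * (Aᵀ * A) i j := by
  have h : euclNorm (A.mulVec x) ^ 2 = x ⬝ᵥ ((Aᵀ * A).mulVec x) := by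
    rw [euclNorm_sq, ← Matrix.mulVec_mulVec, Matrix.dotProduct_mulVec x, Matrix.vecMul_transpose]
  rw [h]
  simp only [dotProduct, Matrix.mulVec, Finset.mul_sum]
  exact Finset.sum_congr rfl fun i _ => Finset.sum_congr rfl fun j _ => by ring

lemma gram_apply {n : ℕ} (A : Matrix (Fin n) (Fin n) ℝ) (i j : Fin n) :
    (Aᵀ * A) i j = A.mulVec (Pi.single i 1) ⬝ᵥ A.mulVec (Pi.single j 1) := by
  simp [Matrix.mul_apply, dotProduct]

lemma gram_polarization {n : ℕ} (A : Matrix (Fin n) (Fin n) ℝ) (i j : Fin n) :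
    (Aᵀ * A) i j = (euclNorm (A.mulVec (Pi.single i 1 + Pi.single j 1)) ^ 2
      - euclNorm (A.mulVec (Pi.single i 1)) ^ 2
      - euclNorm (A.mulVec (Pi.single j 1)) ^ 2) / 2 := by
  rw [gram_apply, euclNorm_sq, euclNorm_sq, euclNorm_sq, Matrix.mulVec_add]
  simp only [add_dotProduct, dotProduct_add]
  rw [dotProduct_comm (A.mulVec (Pi.single j 1)) (A.mulVec (Pi.single i 1))]
  ring

lemma abs_gram_le {n : ℕ} (A : Matrix (Fin n) (Fin n) ℝ) (i j : Fin n) :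
    |(Aᵀ * A) i j| ≤ (Aᵀ * A) i i + (Aᵀ * A) j j := by
  simp only [Matrix.mul_apply, Matrix.transpose_apply, ← Finset.sum_add_distrib]
  refine (Finset.abs_sum_le_sum_abs _ _).trans (Finset.sum_le_sum fun k _ => ?_)
  rw [abs_le]
  constructor <;> nlinarith [sq_nonneg (A k i + A k j), sq_nonneg (A k i - A k j),
    sq_nonneg (A k i), sq_nonneg (A k j)]

/-- The covariance identity with a non-zero constant already forces integrability of the Gram
matrix: a non-integrable diagonal entry would have Bochner integral `0`. -/
lemma integrable_gram_entry {Ω : Type*} [MeasurableSpace Ω] (μ : Measure Ω) {N : ℕ}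
    (P : Ω → Matrix (Fin N) (Fin N) ℝ)
    (hint : ∀ x : Fin N → ℝ, Integrable (fun ω => euclNorm ((P ω).mulVec x)) μ)
    {c : ℝ} (hc : c ≠ 0)
    (hcov : ∀ i j, (∫ ω, ((P ω)ᵀ * (P ω)) i j ∂μ)
        = (c • (1 : Matrix (Fin N) (Fin N) ℝ)) i j) (i j : Fin N) :
    Integrable (fun ω => ((P ω)ᵀ * P ω) i j) μ := by
  have hdiag : ∀ i, Integrable (fun ω => ((P ω)ᵀ * P ω) i i) μ := fun i => by
    by_contra h
    have := hcov i i
    rw [integral_undef h] at this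
    simp at this
    exact hc this.symm
  have hmeas : ∀ x : Fin N → ℝ,
      AEStronglyMeasurable (fun ω => euclNorm ((P ω).mulVec x) ^ 2) μ :=
    fun x => (hint x).aestronglyMeasurable.pow 2
  refine ((hdiag i).add (hdiag j)).mono' ?_ (Filter.Eventually.of_forall fun ω => abs_gram_le _ _ _)
  simp only [gram_polarization, div_eq_mul_inv]
  exact (((hmeas _).sub (hmeas _)).sub (hmeas _)).mul_const _

lemma sq_integral_le_integral_sq {Ω : Type*} [MeasurableSpace Ω] (μ : Measure Ω)
    [IsProbabilityMeasure μ] {f : Ω → ℝ} (hf : Integrable f μ)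
    (hf2 : Integrable (fun ω => f ω ^ 2) μ) :
    (∫ ω, f ω ∂μ) ^ 2 ≤ ∫ ω, f ω ^ 2 ∂μ :=
  (even_two.convexOn_pow (𝕜 := ℝ)).map_integral_le (continuous_pow 2).continuousOn isClosed_univ
    (Filter.Eventually.of_forall fun _ => Set.mem_univ _) hf hf2

/-- Random orthogonal-like projections reduce the Lipschitz constant of an inverse map
by a factor of `√(K/N)` in expectation. -/
theorem expected_projection_lipschitz_reduction
    {Ω : Type*} [MeasurableSpace Ω] (μ : Measure Ω) [IsProbabilityMeasure μ]
    (N M K : ℕ) (hK : 1 ≤ K) (hKN : K ≤ N)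
    (P : Ω → Matrix (Fin N) (Fin N) ℝ)
    (hint : ∀ x : Fin N → ℝ, Integrable (fun ω => euclNorm ((P ω).mulVec x)) μ)
    (hcov : ∀ i j, (∫ ω, ((P ω)ᵀ * (P ω)) i j ∂μ)
        = (((K : ℝ) / N) • (1 : Matrix (Fin N) (Fin N) ℝ)) i j)
    (G : EuclideanSpace ℝ (Fin M) → EuclideanSpace ℝ (Fin N)) (L : ℝ)
    (hG : ∀ y₁ y₂, ‖G y₁ - G y₂‖ ≤ L * ‖y₁ - y₂‖) :
    ∀ y₁ y₂ : EuclideanSpace ℝ (Fin M),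
      (∫ ω, euclNorm ((P ω).mulVec (G y₁ - G y₂)) ∂μ)
        ≤ Real.sqrt ((K : ℝ) / N) * L * ‖y₁ - y₂‖ := by
  intro y₁ y₂
  set x : EuclideanSpace ℝ (Fin N) := G y₁ - G y₂ with hx
  have hc : (0 : ℝ) < (K : ℝ) / N := by
    have h1 : (0 : ℝ) < K := by exact_mod_cast hK
    have h2 : (0 : ℝ) < N := by exact_mod_cast lt_of_lt_of_le hK hKN
    positivity
  have hgram := integrable_gram_entry μ P hint hc.ne' hcov
  have hexp : ∀ ω, euclNorm ((P ω).mulVec x) ^ 2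
      = ∑ i, ∑ j, x i * x j * ((P ω)ᵀ * P ω) i j := fun ω => euclNorm_mulVec_sq _ _
  have hsq : Integrable (fun ω => euclNorm ((P ω).mulVec x) ^ 2) μ := by
    simp only [hexp]
    exact integrable_finsetSum _ fun i _ => integrable_finsetSum _ fun j _ =>
      (hgram i j).const_mul _
  have hval : ∫ ω, euclNorm ((P ω).mulVec x) ^ 2 ∂μ = (K : ℝ) / N * ‖x‖ ^ 2 := by
    simp only [hexp]
    rw [integral_finsetSum _ fun i _ => integrable_finsetSum _ fun j _ =>
      (hgram i j).const_mul _]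
    simp_rw [integral_finsetSum _ fun j _ => (hgram _ j).const_mul _, integral_const_mul, hcov]
    rw [EuclideanSpace.real_norm_sq_eq, Finset.mul_sum]
    refine Finset.sum_congr rfl fun i _ => ?_
    simp [Matrix.one_apply]
    ring
  have hjensen := sq_integral_le_integral_sq μ (hint x) hsq
  rw [hval] at hjensen
  calc ∫ ω, euclNorm ((P ω).mulVec x) ∂μ
      ≤ Real.sqrt ((K : ℝ) / N * ‖x‖ ^ 2) := Real.le_sqrt_of_sq_le hjensen
    _ = Real.sqrt ((K : ℝ) / N) * ‖x‖ := by
        rw [Real.sqrt_mul hc.le, Real.sqrt_sq (norm_nonneg _)]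
    _ ≤ Real.sqrt ((K : ℝ) / N) * (L * ‖y₁ - y₂‖) :=
        mul_le_mul_of_nonneg_left (hG y₁ y₂) (Real.sqrt_nonneg _)
    _ = Real.sqrt ((K : ℝ) / N) * L * ‖y₁ - y₂‖ := by ring
end

section
/- Let A ∈ Matrix (Fin M) (Fin N) ℝ and B ∈ Matrix (Fin N) (Fin K) ℝ, and suppose the K×K matrix (A*B)ᵀ*(A*B) is invertible (i.e., A*B has linearly independent columns). Define F = B * ((A*B)ᵀ*(A*B))⁻¹ * (A*B)ᵀ ∈ Matrix (Fin N) (Fin M) ℝ and P = F * A ∈ Matrix (Fin N) (Fin N) ℝ. Then: (i) P * B = B, so P x = x for every x in the column span of B; (ii) P * P = P; and (iii) for every x ∈ ℝ^N with A x = 0, one has P x = 0 (the kernel of A is contained in the kernel of P). -/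
/-!
Writing `G = ((AB)ᵀ(AB))⁻¹(AB)ᵀ` for the left inverse of `AB`, one has `P = BGA`, so
`PB = B(G(AB)) = B`. Since `P` has `B` as a left factor, idempotence follows from `PB = B`;
since it has `A` as a right factor, it vanishes on the kernel of `A`.
-/

open Matrix

/-- The least-squares consistent linear reconstruction operator
`F = B((AB)ᵀ(AB))⁻¹(AB)ᵀ` yields an oblique projection `P = FA` onto the column
span of `B` whose kernel contains the kernel of `A`. -/
theorem least_squares_oblique_projection
    (M N K : ℕ)
    (A : Matrix (Fin M) (Fin N) ℝ) (B : Matrix (Fin N) (Fin K) ℝ)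
    (hinv : IsUnit ((A * B)ᵀ * (A * B)))
    (F : Matrix (Fin N) (Fin M) ℝ)
    (hF : F = B * ((A * B)ᵀ * (A * B))⁻¹ * (A * B)ᵀ)
    (P : Matrix (Fin N) (Fin N) ℝ)
    (hP : P = F * A) :
    (P * B = B ∧ ∀ x ∈ Set.range B.mulVec, P.mulVec x = x) ∧
      P * P = P ∧
      ∀ x : Fin N → ℝ, A.mulVec x = 0 → P.mulVec x = 0 := by
  have hPB : P * B = B := by
    rw [hP, hF, Matrix.mul_assoc, Matrix.mul_assoc, Matrix.mul_assoc,
      Matrix.nonsing_inv_mul _ ((Matrix.isUnit_iff_isUnit_det _).mp hinv), Matrix.mul_one]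
  refine ⟨⟨hPB, ?_⟩, ?_, ?_⟩
  · rintro _ ⟨c, rfl⟩
    rw [Matrix.mulVec_mulVec, hPB]
  · -- `P = B * H` for some `H`, so `P * P = (P * B) * H = B * H = P`.
    have hfac : P = B * (((A * B)ᵀ * (A * B))⁻¹ * (A * B)ᵀ * A) := by
      rw [hP, hF]
      simp only [Matrix.mul_assoc]
    calc P * P = P * (B * (((A * B)ᵀ * (A * B))⁻¹ * (A * B)ᵀ * A)) := by rw [← hfac]
      _ = P := by rw [← Matrix.mul_assoc, hPB, ← hfac]
  · intro x hx
    rw [hP, ← Matrix.mulVec_mulVec, hx, Matrix.mulVec_zero]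
end
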